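/- arXiv:1405.1165 — 2 statements merged into one kernel-verified Lean document; each statement's English description precedes it below -/
import Mathlib

section
/- Let d ≥ 2 and a > 2b > 0, and let y ∈ S₊ with y ≠ arcsin(√(b/a)). Then u_y' vanishes at least once on (0,∞); at the first positive zero r'_y of u_y', the local energy satisfies H(r'_y) < 0. Moreover, the set S₊ is an open subset of (0, π/2). -/
open Real Filter

noncomputable section

/-- The nonlinearity `F(x) = (a/2)·sin(2x)·(sin²x − b/a)`. -/
def Fnl (a b x : ℝ) : ℝ := (a / 2) * Real.sin (2 * x) * (Real.sin x ^ 2 - b / a)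

/-- `u` solves the radial ODE `u'' + ((d−1)/r)u' + F(u) = 0` on `(0,∞)` with `u'(0) = 0`. -/
def IsRadialSol (d : ℕ) (a b : ℝ) (u : ℝ → ℝ) : Prop :=
  ContDiff ℝ 2 u ∧ deriv u 0 = 0 ∧
  ∀ r : ℝ, 0 < r →
    deriv (deriv u) r + (((d : ℝ) - 1) / r) * deriv u r + Fnl a b (u r) = 0

/-- `u` is the family of solutions of the radial ODE with `u y 0 = y`, `(u y)'(0) = 0`. -/
def IsShootingFamily (d : ℕ) (a b : ℝ) (u : ℝ → ℝ → ℝ) : Prop :=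
  ∀ y ∈ Set.Ioo (0 : ℝ) (Real.pi / 2), IsRadialSol d a b (u y) ∧ u y 0 = y

/-- `S₊`: initial data whose solution stays bounded away from zero. -/
def Splus (u : ℝ → ℝ → ℝ) : Set ℝ :=
  {y | y ∈ Set.Ioo (0 : ℝ) (Real.pi / 2) ∧ ∃ ε > (0 : ℝ), ∀ r : ℝ, 0 ≤ r → ε ≤ u y r}

/-- `S₀`: initial data whose solution is positive and tends to zero at infinity. -/
def Szero (u : ℝ → ℝ → ℝ) : Set ℝ :=
  {y | y ∈ Set.Ioo (0 : ℝ) (Real.pi / 2) ∧ (∀ r : ℝ, 0 ≤ r → 0 < u y r) ∧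
    Tendsto (u y) atTop (nhds 0)}

/-- `S₋`: initial data whose solution vanishes at some positive radius. -/
def Sminus (u : ℝ → ℝ → ℝ) : Set ℝ :=
  {y | y ∈ Set.Ioo (0 : ℝ) (Real.pi / 2) ∧ ∃ r > (0 : ℝ), u y r = 0}

/-- The local energy `H(r) = u'(r)²/2 + (a/4)sin⁴(u(r)) − (b/2)sin²(u(r))`. -/
def Hloc (a b : ℝ) (u : ℝ → ℝ) (r : ℝ) : ℝ :=
  deriv u r ^ 2 / 2 + (a / 4) * Real.sin (u r) ^ 4 - (b / 2) * Real.sin (u r) ^ 2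

section

open Set Topology
open scoped NNReal

/-!
The damping makes the energy nonincreasing, so a solution never reaches a level whose potential
exceeds its present energy.

Suppose `u` stays away from `0`. If `u'` had no zero, `u` would converge strictly monotonically to
the bottom `θ` of the potential well, but linearising there, `u' / (u - θ)` satisfies a Riccati
inequality under which its arctangent decreases at a definite rate forever: solutions near `θ`
oscillate. So `u'` vanishes somewhere. If it vanishes at `r` with energy at least `G 0`, then it
also vanishes at the minimum of `u` on `[0, r]`, where the energy is purely potential; this places
the minimum beyond `θ`, so that the force is positive on `(0, r)` and `s ^ ν * u'(s)` decreases
strictly from `0`, contradicting `u'(r) = 0`.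

Having energy below `G 0` at a given radius is an open condition on the initial datum, and it
bounds the solution away from `0` from then on, while up to that radius Grönwall's inequality gives
uniform convergence. Hence `S₊` is open.
-/

theorem exists_tendsto_of_strictMonoOn_Ici {u : ℝ → ℝ} {R M : ℝ} (hu : StrictMonoOn u (Ici R))
    (hM : ∀ r ∈ Ici R, u r ≤ M) : ∃ L, Tendsto u atTop (𝓝 L) ∧ ∀ r ∈ Ici R, u r < L := by
  have hmono : StrictMono (fun r : Ici R => u r) := fun r s hrs => hu r.2 s.2 hrs
  have hlim := tendsto_atTop_ciSup hmono.monotone ⟨M, by rintro _ ⟨r, rfl⟩; exact hM r r.2⟩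
  refine ⟨_, tendsto_comp_val_Ici_atTop.1 hlim, fun r hr => ?_⟩
  obtain ⟨s, hs⟩ := exists_gt (⟨r, hr⟩ : Ici R)
  exact (hmono hs).trans_le (hmono.monotone.ge_of_tendsto hlim s)

theorem strictMonoOn_or_strictAntiOn_of_deriv_ne_zero {D : Set ℝ} (hD : Convex ℝ D) {f : ℝ → ℝ}
    (hf : ContinuousOn f D) (hf' : ∀ x ∈ interior D, deriv f x ≠ 0) :
    StrictMonoOn f D ∨ StrictAntiOn f D := by
  have hderiv : ∀ x ∈ interior D, HasDerivWithinAt f (deriv f x) (interior D) x := fun x hx =>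
    (differentiableAt_of_deriv_ne_zero (hf' x hx)).hasDerivAt.hasDerivWithinAt
  rcases hasDerivWithinAt_forall_lt_or_forall_gt_of_forall_ne hD.interior hderiv hf' with
    hneg | hpos
  · exact .inr (strictAntiOn_of_deriv_neg hD hf hneg)
  · exact .inl (strictMonoOn_of_deriv_pos hD hf hpos)

theorem exists_tendsto_of_deriv_ne_zero {u : ℝ → ℝ} {R m M : ℝ} (hu : ContinuousOn u (Ici R))
    (hne : ∀ r, R < r → deriv u r ≠ 0) (hmM : ∀ r ∈ Ici R, u r ∈ Icc m M) :
    ∃ L, Tendsto u atTop (𝓝 L) ∧ ∀ r ∈ Ici R, u r ≠ L := by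
  rcases strictMonoOn_or_strictAntiOn_of_deriv_ne_zero (convex_Ici R) hu
    (by rwa [interior_Ici]) with hmono | hanti
  · obtain ⟨L, hL, hlt⟩ := exists_tendsto_of_strictMonoOn_Ici hmono fun r hr => (hmM r hr).2
    exact ⟨L, hL, fun r hr => (hlt r hr).ne⟩
  · obtain ⟨L, hL, hlt⟩ := exists_tendsto_of_strictMonoOn_Ici hanti.neg
      fun r hr => neg_le_neg (hmM r hr).1
    refine ⟨-L, by simpa only [neg_neg] using hL.neg, fun r hr h => ?_⟩
    exact (hlt r hr).ne (neg_eq_iff_eq_neg.2 h)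

theorem eq_zero_of_tendsto_deriv_of_bounded {g : ℝ → ℝ} {m C : ℝ} (hg : Differentiable ℝ g)
    (hC : ∀ᶠ r in atTop, |g r| ≤ C) (hm : Tendsto (deriv g) atTop (𝓝 m)) : m = 0 := by
  by_contra hm0
  have hm2 : 0 < |m| / 2 := half_pos (abs_pos.2 hm0)
  obtain ⟨R, hR⟩ := eventually_atTop.1
    (hC.and (hm.abs.eventually (lt_mem_nhds (half_lt_self (abs_pos.2 hm0)))))
  have hC0 : 0 ≤ C := (abs_nonneg _).trans (hR R le_rfl).1
  set T := 2 * C / (|m| / 2) + 1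
  have hT : 0 < T := by positivity
  obtain ⟨c, hc, hslope⟩ := exists_deriv_eq_slope g (lt_add_of_pos_right R hT)
    hg.continuous.continuousOn hg.differentiableOn
  rw [add_sub_cancel_left, eq_div_iff hT.ne'] at hslope
  have hupper : |deriv g c * T| ≤ 2 * C := by
    rw [hslope]
    linarith [abs_sub (g (R + T)) (g R), (hR R le_rfl).1, (hR (R + T) (by linarith)).1]
  have hlower : 2 * C < |deriv g c * T| := by
    calc 2 * C < |m| / 2 * T := by
          rw [mul_add_one, mul_div_cancel₀ _ hm2.ne']
          linarith
      _ ≤ |deriv g c * T| := by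
          rw [abs_mul, abs_of_pos hT]
          exact mul_le_mul_of_nonneg_right (hR c hc.1.le).2.le hT.le
  exact hlower.not_ge hupper

theorem not_riccati_le_on_Ici {p p' : ℝ → ℝ} {κ R : ℝ} (hκ : 0 < κ)
    (hp : ∀ r ∈ Ici R, HasDerivAt p (p' r) r) :
    ¬ ∀ r ∈ Ici R, p' r ≤ -κ * (1 + p r ^ 2) := by
  intro hle
  have hderiv : ∀ r ∈ Ici R, HasDerivAt (fun s => arctan (p s) + κ * s)
      (1 / (1 + p r ^ 2) * p' r + κ) r := fun r hr =>
    (hp r hr).arctan.add (hasDerivAt_const_mul κ)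
  have hanti : AntitoneOn (fun s => arctan (p s) + κ * s) (Ici R) := by
    refine antitoneOn_of_hasDerivWithinAt_nonpos (convex_Ici R)
      (fun r hr => (hderiv r hr).continuousAt.continuousWithinAt)
      (fun r hr => (hderiv r (interior_subset hr)).hasDerivWithinAt) fun r hr => ?_
    have hpos : 0 < 1 + p r ^ 2 := by positivity
    have : 1 / (1 + p r ^ 2) * p' r ≤ -κ := by
      rw [one_div, inv_mul_le_iff₀ hpos, mul_comm]
      exact hle r (interior_subset hr)
    linarith
  have hT : 0 ≤ π / κ := div_nonneg pi_pos.le hκ.le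
  have hdrop := hanti self_mem_Ici (mem_Ici.2 (le_add_of_nonneg_right hT))
    (le_add_of_nonneg_right hT)
  simp only [mul_add, mul_div_cancel₀ _ hκ.ne'] at hdrop
  linarith [neg_pi_div_two_lt_arctan (p (R + π / κ)), arctan_lt_pi_div_two (p R)]

/-- A solution of the damped equation `u'' + (ν / r) u' + f(u) = 0` on `(0, ∞)` with `u'(0) = 0`.
The radial equation in dimension `d` is the case `ν = d - 1`. -/
structure IsDampedSolution (ν : ℝ) (f u : ℝ → ℝ) : Prop where
  contDiff : ContDiff ℝ 2 u
  deriv_zero : deriv u 0 = 0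
  equation : ∀ r, 0 < r → deriv (deriv u) r + ν / r * deriv u r + f (u r) = 0

/-- The mechanical energy along `u` for the potential `G`. -/
def energy (G u : ℝ → ℝ) (r : ℝ) : ℝ := deriv u r ^ 2 / 2 + G (u r)

theorem potential_le_energy (G u : ℝ → ℝ) (r : ℝ) : G (u r) ≤ energy G u r :=
  le_add_of_nonneg_left (by positivity)

namespace IsDampedSolution

variable {ν c : ℝ} {f G u v : ℝ → ℝ}

theorem hasDerivAt (hu : IsDampedSolution ν f u) (r : ℝ) : HasDerivAt u (deriv u r) r :=
  (hu.contDiff.differentiable two_ne_zero r).hasDerivAt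

theorem contDiff_deriv (hu : IsDampedSolution ν f u) : ContDiff ℝ 1 (deriv u) :=
  (contDiff_succ_iff_deriv (n := 1).1 (by simpa only [one_add_one_eq_two] using hu.contDiff)).2.2

theorem hasDerivAt_deriv (hu : IsDampedSolution ν f u) (r : ℝ) :
    HasDerivAt (deriv u) (deriv (deriv u) r) r :=
  (hu.contDiff_deriv.differentiable one_ne_zero r).hasDerivAt

theorem hasDerivAt_energy (hu : IsDampedSolution ν f u) (hG : ∀ x, HasDerivAt G (f x) x) (r : ℝ) :
    HasDerivAt (energy G u) (deriv u r * (deriv (deriv u) r + f (u r))) r := by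
  refine ((((hu.hasDerivAt_deriv r).pow 2).div_const 2).add
    ((hG (u r)).comp r (hu.hasDerivAt r))).congr_deriv ?_
  ring

theorem antitoneOn_energy (hν : 0 ≤ ν) (hu : IsDampedSolution ν f u)
    (hG : ∀ x, HasDerivAt G (f x) x) : AntitoneOn (energy G u) (Ici 0) := by
  refine antitoneOn_of_hasDerivWithinAt_nonpos (convex_Ici 0)
    (fun r _ => (hu.hasDerivAt_energy hG r).continuousAt.continuousWithinAt)
    (fun r _ => (hu.hasDerivAt_energy hG r).hasDerivWithinAt) fun r hr => ?_
  rw [interior_Ici, mem_Ioi] at hr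
  calc deriv u r * (deriv (deriv u) r + f (u r)) = -(ν / r * deriv u r ^ 2) := by
        linear_combination deriv u r * hu.equation r hr
    _ ≤ 0 := neg_nonpos.2 (by positivity)

theorem energy_zero (hu : IsDampedSolution ν f u) : energy G u 0 = G (u 0) := by
  simp [energy, hu.deriv_zero]

theorem potential_le (hν : 0 ≤ ν) (hu : IsDampedSolution ν f u) (hG : ∀ x, HasDerivAt G (f x) x)
    {r₀ r : ℝ} (hr₀ : 0 ≤ r₀) (hr : r₀ ≤ r) : G (u r) ≤ energy G u r₀ :=
  (potential_le_energy G u r).trans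
    (hu.antitoneOn_energy hν hG (mem_Ici.2 hr₀) (mem_Ici.2 (hr₀.trans hr)) hr)

theorem lt_of_energy_lt (hν : 0 ≤ ν) (hu : IsDampedSolution ν f u)
    (hG : ∀ x, HasDerivAt G (f x) x) {r₀ r : ℝ} (hr₀ : 0 ≤ r₀) (hc : energy G u r₀ < G c)
    (h : u r₀ < c) (hr : r₀ ≤ r) : u r < c := by
  by_contra! hcr
  obtain ⟨s, hs, rfl⟩ := intermediate_value_Icc hr hu.contDiff.continuous.continuousOn ⟨h.le, hcr⟩
  exact hc.not_ge (hu.potential_le hν hG hr₀ hs.1)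

theorem gt_of_energy_lt (hν : 0 ≤ ν) (hu : IsDampedSolution ν f u)
    (hG : ∀ x, HasDerivAt G (f x) x) {r₀ r : ℝ} (hr₀ : 0 ≤ r₀) (hc : energy G u r₀ < G c)
    (h : c < u r₀) (hr : r₀ ≤ r) : c < u r := by
  by_contra! hcr
  obtain ⟨s, hs, rfl⟩ := intermediate_value_Icc' hr hu.contDiff.continuous.continuousOn ⟨hcr, h.le⟩
  exact hc.not_ge (hu.potential_le hν hG hr₀ hs.1)

theorem exists_gt_forall_gt_of_energy_lt (hν : 0 ≤ ν) (hu : IsDampedSolution ν f u)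
    (hG : ∀ x, HasDerivAt G (f x) x) {r₀ : ℝ} (hr₀ : 0 ≤ r₀) (hc : energy G u r₀ < G c)
    (h : c < u r₀) : ∃ δ > c, ∀ r, r₀ ≤ r → δ < u r := by
  have hnear : ∀ᶠ δ in 𝓝[>] c, energy G u r₀ < G δ ∧ δ < u r₀ :=
    nhdsWithin_le_nhds (((hG c).continuousAt.eventually (lt_mem_nhds hc)).and (gt_mem_nhds h))
  obtain ⟨δ, ⟨hδ, hδu⟩, hcδ⟩ := (hnear.and self_mem_nhdsWithin).exists
  exact ⟨δ, hcδ, fun r hr => hu.gt_of_energy_lt hν hG hr₀ hδ hδu hr⟩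

theorem hasDerivAt_rpow_mul_deriv (hu : IsDampedSolution ν f u) {r : ℝ} (hr : 0 < r) :
    HasDerivAt (fun s => s ^ ν * deriv u s) (-(r ^ ν * f (u r))) r := by
  refine ((hasDerivAt_rpow_const (.inl hr.ne')).mul (hu.hasDerivAt_deriv r)).congr_deriv ?_
  rw [rpow_sub_one hr.ne']
  linear_combination r ^ ν * hu.equation r hr

theorem deriv_neg_of_forall_pos (hν : 0 ≤ ν) (hu : IsDampedSolution ν f u) {r : ℝ} (hr : 0 < r)
    (hf : ∀ s ∈ Ioo 0 r, 0 < f (u s)) : deriv u r < 0 := by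
  have hanti : StrictAntiOn (fun s => s ^ ν * deriv u s) (Icc 0 r) := by
    refine strictAntiOn_of_hasDerivWithinAt_neg (f' := fun s => -(s ^ ν * f (u s))) (convex_Icc 0 r)
      ((continuous_id.rpow_const fun _ => .inr hν).mul hu.contDiff_deriv.continuous).continuousOn
      ?_ ?_ <;> rw [interior_Icc]
    · exact fun s hs => (hu.hasDerivAt_rpow_mul_deriv hs.1).hasDerivWithinAt
    · exact fun s hs => neg_neg_of_pos (mul_pos (rpow_pos_of_pos hs.1 ν) (hf s hs))
  have hlt := hanti (left_mem_Icc.2 hr.le) (right_mem_Icc.2 hr.le) hr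
  simp only [hu.deriv_zero, mul_zero] at hlt
  exact (pos_iff_neg_of_mul_neg hlt).1 (rpow_pos_of_pos hr ν)

theorem exists_eventually_abs_deriv_le (hν : 0 ≤ ν) (hu : IsDampedSolution ν f u)
    (hG : ∀ x, HasDerivAt G (f x) x) {L : ℝ} (hL : Tendsto u atTop (𝓝 L)) :
    ∃ C, ∀ᶠ r in atTop, |deriv u r| ≤ C := by
  have hGL : Tendsto (fun r => G (u r)) atTop (𝓝 (G L)) := (hG L).continuousAt.tendsto.comp hL
  refine ⟨√(2 * (G (u 0) - (G L - 1))), ?_⟩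
  filter_upwards [hGL.eventually (lt_mem_nhds (sub_one_lt (G L))), eventually_ge_atTop 0]
    with r hGr hr
  have hE := hu.antitoneOn_energy hν hG self_mem_Ici (mem_Ici.2 hr) hr
  rw [hu.energy_zero, energy] at hE
  exact abs_le_sqrt (by linarith)

theorem force_eq_zero_of_tendsto (hν : 0 ≤ ν) (hu : IsDampedSolution ν f u)
    (hG : ∀ x, HasDerivAt G (f x) x) {L : ℝ} (hf : ContinuousAt f L)
    (hL : Tendsto u atTop (𝓝 L)) : f L = 0 := by
  obtain ⟨C, hC⟩ := hu.exists_eventually_abs_deriv_le hν hG hL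
  have hdamping : Tendsto (fun r => ν / r * deriv u r) atTop (𝓝 0) :=
    (tendsto_const_nhds.div_atTop tendsto_id).zero_mul_isBoundedUnder_le ⟨C, hC⟩
  have hderiv₂ : Tendsto (deriv (deriv u)) atTop (𝓝 (-f L)) := by
    have hlim := (hdamping.add (hf.tendsto.comp hL)).neg
    rw [zero_add] at hlim
    refine hlim.congr' ?_
    filter_upwards [eventually_gt_atTop 0] with r hr
    simp only [Function.comp_apply]
    linarith [hu.equation r hr]
  exact neg_eq_zero.1 (eq_zero_of_tendsto_deriv_of_bounded
    (hu.contDiff_deriv.differentiable one_ne_zero) hC hderiv₂)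

theorem hasDerivAt_deriv_div_sub (hu : IsDampedSolution ν f u) {L r : ℝ} (hr : 0 < r)
    (hL : u r ≠ L) :
    HasDerivAt (fun s => deriv u s / (u s - L))
      (-(f (u r) / (u r - L)) - ν / r * (deriv u r / (u r - L)) - (deriv u r / (u r - L)) ^ 2)
      r := by
  have hw : u r - L ≠ 0 := sub_ne_zero.2 hL
  refine ((hu.hasDerivAt_deriv r).div ((hu.hasDerivAt r).sub_const L) hw).congr_deriv ?_
  have hu₂ : deriv (deriv u) r = -(ν / r * deriv u r) - f (u r) := by
    linear_combination hu.equation r hr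
  rw [hu₂]
  field_simp
  ring

theorem frequently_eq_of_tendsto (hu : IsDampedSolution ν f u) {L κ : ℝ}
    (hL : Tendsto u atTop (𝓝 L)) (hfL : f L = 0) (hκ : 0 < κ) (hf' : HasDerivAt f κ L) :
    ∃ᶠ r in atTop, u r = L := by
  intro hne
  have huL : Tendsto u atTop (𝓝[≠] L) := tendsto_nhdsWithin_iff.2 ⟨hL, hne⟩
  have hquot : ∀ᶠ r in atTop, κ / 2 < f (u r) / (u r - L) := by
    filter_upwards [((hasDerivAt_iff_tendsto_slope.1 hf').comp huL).eventually
      (lt_mem_nhds (half_lt_self hκ))] with r hr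
    simpa only [Function.comp_apply, slope_def_field, hfL, sub_zero] using hr
  have hdamping : ∀ᶠ r : ℝ in atTop, (ν / r) ^ 2 < κ / 2 := by
    have : Tendsto (fun r : ℝ => (ν / r) ^ 2) atTop (𝓝 0) := by
      simpa using (tendsto_const_nhds (x := ν)).div_atTop tendsto_id |>.pow 2
    exact this.eventually (gt_mem_nhds (half_pos hκ))
  obtain ⟨R, hR⟩ := eventually_atTop.1
    (((hquot.and hdamping).and hne).and (eventually_gt_atTop 0))
  refine not_riccati_le_on_Ici (lt_min (by positivity : 0 < κ / 4) one_half_pos)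
    (fun r hr => hu.hasDerivAt_deriv_div_sub (hR r hr).2 (hR r hr).1.2) fun r hr => ?_
  obtain ⟨⟨⟨hq, hδ⟩, -⟩, -⟩ := hR r hr
  generalize f (u r) / (u r - L) = q at *
  generalize deriv u r / (u r - L) = p at *
  generalize ν / r = δ at *
  have hyoung : -(δ * p) ≤ (δ ^ 2 + p ^ 2) / 2 := by linarith [sq_nonneg (δ + p)]
  calc -q - δ * p - p ^ 2 ≤ -(κ / 4) - 1 / 2 * p ^ 2 := by linarith
    _ ≤ -min (κ / 4) (1 / 2) * (1 + p ^ 2) := by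
      linarith [min_le_left (κ / 4) (1 / 2),
        mul_le_mul_of_nonneg_right (min_le_right (κ / 4) (1 / 2)) (sq_nonneg p)]

theorem deriv_sq_deviation_le {K : ℝ≥0} (hν : 0 ≤ ν) (hf : LipschitzWith K f)
    (hu : IsDampedSolution ν f u) (hv : IsDampedSolution ν f v) {r : ℝ} (hr : 0 ≤ r) :
    2 * (u r - v r) * (deriv u r - deriv v r) +
        2 * (deriv u r - deriv v r) * (deriv (deriv u) r - deriv (deriv v) r) ≤
      (K + 1) * ((u r - v r) ^ 2 + (deriv u r - deriv v r) ^ 2) := by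
  have hforce : |f (u r) - f (v r)| ≤ K * |u r - v r| := by
    simpa only [Real.dist_eq] using hf.dist_le_mul (u r) (v r)
  have hequation : (deriv u r - deriv v r) * (deriv (deriv u) r - deriv (deriv v) r) =
      -(ν / r * (deriv u r - deriv v r) ^ 2) -
        (deriv u r - deriv v r) * (f (u r) - f (v r)) := by
    rcases hr.eq_or_lt with rfl | hr
    · simp [hu.deriv_zero, hv.deriv_zero]
    · linear_combination
        (deriv u r - deriv v r) * (hu.equation r hr - hv.equation r hr)
  have hdamping : 0 ≤ ν / r * (deriv u r - deriv v r) ^ 2 := by positivity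
  generalize deriv u r - deriv v r = p at *
  generalize u r - v r = w at *
  have hyoung : 2 * (|w| * |p|) ≤ w ^ 2 + p ^ 2 := by
    linarith [two_mul_le_add_sq |w| |p|, sq_abs w, sq_abs p]
  have hwork : -(p * (f (u r) - f (v r))) ≤ K * (|w| * |p|) :=
    calc -(p * (f (u r) - f (v r))) ≤ |p| * |f (u r) - f (v r)| := by
          rw [← abs_mul]
          exact neg_le_abs _
      _ ≤ |p| * (K * |w|) := by gcongr
      _ = K * (|w| * |p|) := by ring
  have hcross : w * p ≤ |w| * |p| := (le_abs_self _).trans_eq (abs_mul w p)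
  linarith [mul_le_mul_of_nonneg_left hyoung K.coe_nonneg]

theorem sq_deviation_le {K : ℝ≥0} (hν : 0 ≤ ν) (hf : LipschitzWith K f)
    (hu : IsDampedSolution ν f u) (hv : IsDampedSolution ν f v) {r : ℝ} (hr : 0 ≤ r) :
    (u r - v r) ^ 2 + (deriv u r - deriv v r) ^ 2 ≤ (u 0 - v 0) ^ 2 * exp ((K + 1) * r) := by
  set D := fun s => (u s - v s) ^ 2 + (deriv u s - deriv v s) ^ 2
  set D' := fun s => 2 * (u s - v s) * (deriv u s - deriv v s) +
    2 * (deriv u s - deriv v s) * (deriv (deriv u) s - deriv (deriv v) s)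
  have hD : ∀ s, HasDerivAt D (D' s) s := fun s =>
    ((((hu.hasDerivAt s).sub (hv.hasDerivAt s)).pow 2).add
      (((hu.hasDerivAt_deriv s).sub (hv.hasDerivAt_deriv s)).pow 2)).congr_deriv (by simp [D'])
  have hD' : ∀ s ∈ Ico 0 r, D' s ≤ (K + 1) * D s + 0 := fun s hs => by
    rw [add_zero]
    exact deriv_sq_deviation_le hν hf hu hv hs.1
  have hgronwall := le_gronwallBound_of_liminf_deriv_right_le
    (fun s _ => (hD s).continuousAt.continuousWithinAt)
    (fun s _ _ => (hD s).hasDerivWithinAt.liminf_right_slope_le) le_rfl hD' r ⟨hr, le_rfl⟩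
  simpa [D, gronwallBound_ε0, hu.deriv_zero, hv.deriv_zero] using hgronwall

theorem tendstoUniformlyOn_phase {K : ℝ≥0} (hν : 0 ≤ ν) (hf : LipschitzWith K f)
    {u : ℝ → ℝ → ℝ} {y : ℝ} (hu : ∀ᶠ z in 𝓝 y, IsDampedSolution ν f (u z) ∧ u z 0 = z) (R : ℝ) :
    TendstoUniformlyOn (fun z s => (u z s, deriv (u z) s)) (fun s => (u y s, deriv (u y) s)) (𝓝 y)
      (Icc 0 R) := by
  obtain ⟨huy, huy0⟩ := hu.self_of_nhds
  have hbound : Tendsto (fun z => √((y - z) ^ 2 * exp ((K + 1) * R))) (𝓝 y) (𝓝 0) :=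
    Continuous.tendsto' (by fun_prop) _ _ (by simp)
  rw [Metric.tendstoUniformlyOn_iff]
  intro ε hε
  filter_upwards [hu, hbound.eventually (gt_mem_nhds hε)] with z ⟨huz, huz0⟩ hz s hs
  have hdev : (u y s - u z s) ^ 2 + (deriv (u y) s - deriv (u z) s) ^ 2 ≤
      (y - z) ^ 2 * exp ((K + 1) * R) := by
    refine (sq_deviation_le hν hf huy huz hs.1).trans ?_
    rw [huy0, huz0]
    gcongr
    exact hs.2
  exact max_lt ((abs_le_sqrt (le_of_add_le_of_nonneg_left hdev (sq_nonneg _))).trans_lt hz)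
    ((abs_le_sqrt (le_of_add_le_of_nonneg_right hdev (sq_nonneg _))).trans_lt hz)

theorem eventually_exists_forall_le {K : ℝ≥0} (hν : 0 ≤ ν) (hf : LipschitzWith K f)
    (hG : ∀ x, HasDerivAt G (f x) x) {u : ℝ → ℝ → ℝ} {y c ε R : ℝ}
    (hu : ∀ᶠ z in 𝓝 y, IsDampedSolution ν f (u z) ∧ u z 0 = z) (hε : c < ε)
    (hle : ∀ r, 0 ≤ r → ε ≤ u y r) (hR : 0 ≤ R) (hE : energy G (u y) R < G c) :
    ∀ᶠ z in 𝓝 y, ∃ δ > c, ∀ r, 0 ≤ r → δ ≤ u z r := by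
  have hphase := tendstoUniformlyOn_phase hν hf hu R
  have henergy : Tendsto (fun z => energy G (u z) R) (𝓝 y) (𝓝 (energy G (u y) R)) := by
    have hlim := hphase.tendsto_at (right_mem_Icc.2 hR)
    exact ((hlim.snd_nhds.pow 2).div_const 2).add ((hG _).continuousAt.tendsto.comp hlim.fst_nhds)
  obtain ⟨m, hcm, hmε⟩ := exists_between hε
  filter_upwards [hu, henergy.eventually (gt_mem_nhds hE),
    Metric.tendstoUniformlyOn_iff.1 hphase (ε - m) (sub_pos.2 hmε)] with z ⟨huz, _⟩ hEz hclose
  have hinner : ∀ r ∈ Icc 0 R, m < u z r := fun r hr => by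
    have habs : |u y r - u z r| < ε - m := (le_max_left _ _).trans_lt (hclose r hr)
    linarith [le_abs_self (u y r - u z r), hle r hr.1]
  obtain ⟨δ, hcδ, houter⟩ := huz.exists_gt_forall_gt_of_energy_lt hν hG hR hEz
    (hcm.trans (hinner R (right_mem_Icc.2 hR)))
  refine ⟨min m δ, lt_min hcm hcδ, fun r hr => ?_⟩
  rcases le_total r R with hrR | hRr
  · exact (min_le_left m δ).trans (hinner r ⟨hr, hrR⟩).le
  · exact (min_le_right m δ).trans (houter r hRr).le

end IsDampedSolution

/-- `f = G'` is the force of a potential `G` which on `[0, c]` has a nondegenerate well with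
bottom `θ`, and which is higher at `c` than at `0`. -/
structure IsPotentialWell (f G : ℝ → ℝ) (θ c : ℝ) : Prop where
  bottom_mem : θ ∈ Ioo 0 c
  hasDerivAt : ∀ x, HasDerivAt G (f x) x
  force_neg : ∀ x ∈ Ioo 0 θ, f x < 0
  force_pos : ∀ x ∈ Ioo θ c, 0 < f x
  exists_hasDerivAt_force : ∃ κ > 0, HasDerivAt f κ θ
  potential_zero_lt : G 0 < G c

namespace IsPotentialWell

variable {ν θ c : ℝ} {f G u : ℝ → ℝ}

theorem potential_lt_potential_zero (hW : IsPotentialWell f G θ c) {x : ℝ} (hx : x ∈ Ioc 0 θ) :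
    G x < G 0 := by
  have hanti : StrictAntiOn G (Icc 0 θ) := strictAntiOn_of_hasDerivWithinAt_neg (convex_Icc 0 θ)
    (fun z _ => (hW.hasDerivAt z).continuousAt.continuousWithinAt)
    (fun z _ => (hW.hasDerivAt z).hasDerivWithinAt)
    (by simpa only [interior_Icc] using hW.force_neg)
  exact hanti (left_mem_Icc.2 hW.bottom_mem.1.le) (Ioc_subset_Icc_self hx) hx.1

theorem potential_lt (hW : IsPotentialWell f G θ c) {x : ℝ} (hx : x ∈ Ioo 0 c) : G x < G c := by
  rcases le_or_gt x θ with hxθ | hθx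
  · exact (hW.potential_lt_potential_zero ⟨hx.1, hxθ⟩).trans hW.potential_zero_lt
  · have hmono : StrictMonoOn G (Icc θ c) := strictMonoOn_of_hasDerivWithinAt_pos (convex_Icc θ c)
      (fun z _ => (hW.hasDerivAt z).continuousAt.continuousWithinAt)
      (fun z _ => (hW.hasDerivAt z).hasDerivWithinAt)
      (by simpa only [interior_Icc] using hW.force_pos)
    exact hmono ⟨hθx.le, hx.2.le⟩ (right_mem_Icc.2 hW.bottom_mem.2.le) hx.2

theorem eq_bottom_of_force_eq_zero (hW : IsPotentialWell f G θ c) {x : ℝ} (hx : x ∈ Ioo 0 c)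
    (hfx : f x = 0) : x = θ := by
  rcases lt_trichotomy x θ with hlt | heq | hgt
  · exact absurd hfx (hW.force_neg x ⟨hx.1, hlt⟩).ne
  · exact heq
  · exact absurd hfx (hW.force_pos x ⟨hgt, hx.2⟩).ne'

theorem solution_lt (hν : 0 ≤ ν) (hW : IsPotentialWell f G θ c) (hu : IsDampedSolution ν f u)
    (h0 : u 0 ∈ Ioo 0 c) {r : ℝ} (hr : 0 ≤ r) : u r < c :=
  hu.lt_of_energy_lt hν hW.hasDerivAt le_rfl (hu.energy_zero.trans_lt (hW.potential_lt h0)) h0.2 hr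

theorem limit_eq_bottom (hν : 0 ≤ ν) (hW : IsPotentialWell f G θ c)
    (hu : IsDampedSolution ν f u) (h0 : u 0 ∈ Ioo 0 c) (hf : Continuous f) {L : ℝ} (hL0 : 0 < L)
    (hL : Tendsto u atTop (𝓝 L)) : L = θ := by
  have hLc : L ≤ c := le_of_tendsto hL ((eventually_ge_atTop 0).mono fun r hr =>
    (hW.solution_lt hν hu h0 hr).le)
  have hGL : G L ≤ G (u 0) := le_of_tendsto ((hW.hasDerivAt L).continuousAt.tendsto.comp hL)
    ((eventually_ge_atTop 0).mono fun r hr =>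
      (hu.potential_le hν hW.hasDerivAt le_rfl hr).trans_eq hu.energy_zero)
  have hLne : L ≠ c := by
    rintro rfl
    exact (hW.potential_lt h0).not_ge hGL
  exact hW.eq_bottom_of_force_eq_zero ⟨hL0, hLc.lt_of_ne hLne⟩
    (hu.force_eq_zero_of_tendsto hν hW.hasDerivAt hf.continuousAt hL)

theorem exists_deriv_eq_zero (hν : 0 ≤ ν) (hW : IsPotentialWell f G θ c)
    (hu : IsDampedSolution ν f u) (h0 : u 0 ∈ Ioo 0 c) (hf : Continuous f) {ε : ℝ} (hε : 0 < ε)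
    (hle : ∀ r, 0 ≤ r → ε ≤ u r) : ∃ r > 0, deriv u r = 0 := by
  by_contra! hne
  obtain ⟨L, hL, huL⟩ := exists_tendsto_of_deriv_ne_zero hu.contDiff.continuous.continuousOn hne
    fun r hr => ⟨hle r hr, (hW.solution_lt hν hu h0 hr).le⟩
  have hL0 : 0 < L :=
    hε.trans_le (ge_of_tendsto hL ((eventually_ge_atTop 0).mono hle))
  obtain rfl : L = θ := hW.limit_eq_bottom hν hu h0 hf hL0 hL
  obtain ⟨κ, hκ, hf'⟩ := hW.exists_hasDerivAt_force
  have hfL : f L = 0 := hu.force_eq_zero_of_tendsto hν hW.hasDerivAt hf.continuousAt hL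
  obtain ⟨r, hr, hrL⟩ := ((hu.frequently_eq_of_tendsto hL hfL hκ hf').and_eventually
    (eventually_ge_atTop 0)).exists
  exact huL r hrL hr

theorem energy_lt_of_deriv_eq_zero (hν : 0 ≤ ν) (hW : IsPotentialWell f G θ c)
    (hu : IsDampedSolution ν f u) (h0 : u 0 ∈ Ioo 0 c) {r : ℝ} (hr : 0 < r)
    (hpos : ∀ s ∈ Icc 0 r, 0 < u s) (hr' : deriv u r = 0) : energy G u r < G 0 := by
  by_contra! hE
  obtain ⟨s, hs, hmin⟩ := isCompact_Icc.exists_isMinOn (nonempty_Icc.2 hr.le)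
    hu.contDiff.continuous.continuousOn
  have hs' : deriv u s = 0 := by
    rcases eq_endpoints_or_mem_Ioo_of_mem_Icc hs with rfl | rfl | hs
    · exact hu.deriv_zero
    · exact hr'
    · exact (hmin.isLocalMin (Icc_mem_nhds hs.1 hs.2)).deriv_eq_zero
  have hGs : G 0 ≤ G (u s) := by
    have hEs := hu.antitoneOn_energy hν hW.hasDerivAt (mem_Ici.2 hs.1) (mem_Ici.2 hr.le) hs.2
    simpa [energy, hs'] using hE.trans hEs
  have hθ : θ < u s := not_le.1 fun hle =>
    (hW.potential_lt_potential_zero ⟨hpos s hs, hle⟩).not_ge hGs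
  exact hr'.not_lt (hu.deriv_neg_of_forall_pos hν hr fun t ht => hW.force_pos _
    ⟨hθ.trans_le (hmin (Ioo_subset_Icc_self ht)), hW.solution_lt hν hu h0 ht.1.le⟩)

end IsPotentialWell

theorem isRadialSol_iff_isDampedSolution {d : ℕ} {a b : ℝ} {u : ℝ → ℝ} :
    IsRadialSol d a b u ↔ IsDampedSolution (d - 1) (Fnl a b) u :=
  ⟨fun ⟨h₁, h₂, h₃⟩ => ⟨h₁, h₂, h₃⟩, fun ⟨h₁, h₂, h₃⟩ => ⟨h₁, h₂, h₃⟩⟩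

theorem hasDerivAt_Fnl (a b x : ℝ) :
    HasDerivAt (Fnl a b)
      (a * (cos (2 * x) * (sin x ^ 2 - b / a)) + a / 2 * sin (2 * x) ^ 2) x := by
  have hsin : HasDerivAt (fun x => sin (2 * x)) (cos (2 * x) * 2) x :=
    (hasDerivAt_const_mul 2).sin
  refine ((hsin.const_mul (a / 2)).mul
    (((hasDerivAt_sin x).fun_pow 2).sub_const (b / a))).congr_deriv ?_
  rw [sin_two_mul]
  ring

theorem lipschitzWith_Fnl (a b : ℝ) :
    LipschitzWith (‖a‖₊ * (1 + ‖b / a‖₊) + ‖a / 2‖₊) (Fnl a b) := by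
  refine lipschitzWith_of_nnnorm_deriv_le (fun x => (hasDerivAt_Fnl a b x).differentiableAt)
    fun x => ?_
  have hsin : ∀ z, ‖sin z ^ 2‖ ≤ 1 := fun z => by simpa using abs_sin_le_one z
  have hfactor : ‖sin x ^ 2 - b / a‖ ≤ 1 + ‖b / a‖ :=
    (norm_sub_le _ _).trans (by gcongr; exact hsin x)
  rw [(hasDerivAt_Fnl a b x).deriv, ← NNReal.coe_le_coe]
  push_cast
  refine (norm_add_le _ _).trans ?_
  simp only [norm_mul]
  calc ‖a‖ * (‖cos (2 * x)‖ * ‖sin x ^ 2 - b / a‖) + ‖a / 2‖ * ‖sin (2 * x) ^ 2‖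
    _ ≤ ‖a‖ * (1 * (1 + ‖b / a‖)) + ‖a / 2‖ * 1 := by
        gcongr
        · exact abs_cos_le_one _
        · exact hsin (2 * x)
    _ = ‖a‖ * (1 + ‖b / a‖) + ‖a / 2‖ := by ring

/-- The potential of the nonlinearity `Fnl`, normalised to vanish at `0`. -/
def Gpot (a b x : ℝ) : ℝ := a / 4 * sin x ^ 4 - b / 2 * sin x ^ 2

theorem Hloc_eq_energy (a b : ℝ) (u : ℝ → ℝ) : Hloc a b u = energy (Gpot a b) u := by
  funext r
  exact add_sub_assoc _ _ _

theorem hasDerivAt_Gpot {a : ℝ} (ha : a ≠ 0) (b x : ℝ) :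
    HasDerivAt (Gpot a b) (Fnl a b x) x := by
  refine ((((hasDerivAt_sin x).pow 4).const_mul (a / 4)).sub
    (((hasDerivAt_sin x).pow 2).const_mul (b / 2))).congr_deriv ?_
  rw [Fnl, sin_two_mul]
  field_simp
  ring

theorem isPotentialWell_Fnl {a b : ℝ} (hb : 0 < b) (hab : 2 * b < a) :
    IsPotentialWell (Fnl a b) (Gpot a b) (arcsin √(b / a)) (π / 2) := by
  have ha : 0 < a := by linarith
  have hba : √(b / a) < 1 := by rw [sqrt_lt' one_pos, div_lt_iff₀ (by linarith)]; linarith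
  set θ := arcsin √(b / a)
  have hθ : θ ∈ Ioo 0 (π / 2) := ⟨arcsin_pos.2 (by positivity), arcsin_lt_pi_div_two.2 hba⟩
  have hsinθ : sin θ ^ 2 = b / a := by
    rw [sin_arcsin (by linarith [sqrt_nonneg (b / a)]) hba.le, sq_sqrt (by positivity)]
  have hsin2 : ∀ x ∈ Ioo 0 (π / 2), 0 < sin (2 * x) := fun x hx =>
    sin_pos_of_pos_of_lt_pi (by linarith [hx.1]) (by linarith [hx.2])
  have hsq : ∀ x z, 0 ≤ x → x < z → z ≤ π / 2 → sin x ^ 2 < sin z ^ 2 := fun x z hx hxz hz =>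
    pow_lt_pow_left₀ (sin_lt_sin_of_lt_of_le_pi_div_two (by linarith [pi_pos]) hz hxz)
      (sin_nonneg_of_nonneg_of_le_pi hx (by linarith [pi_pos])) two_ne_zero
  refine ⟨hθ, hasDerivAt_Gpot ha.ne' b, fun x hx => ?_, fun x hx => ?_,
    ⟨a / 2 * sin (2 * θ) ^ 2, ?_, ?_⟩, ?_⟩
  · rw [Fnl, ← hsinθ]
    exact mul_neg_of_pos_of_neg (mul_pos (half_pos ha) (hsin2 x ⟨hx.1, hx.2.trans hθ.2⟩))
      (sub_neg.2 (hsq x θ hx.1.le hx.2 hθ.2.le))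
  · rw [Fnl, ← hsinθ]
    exact mul_pos (mul_pos (half_pos ha) (hsin2 x ⟨hθ.1.trans hx.1, hx.2⟩))
      (sub_pos.2 (hsq θ x hθ.1.le hx.1 hx.2.le))
  · exact mul_pos (half_pos ha) (pow_pos (hsin2 θ hθ) 2)
  · simpa [hsinθ] using hasDerivAt_Fnl a b θ
  · simp only [Gpot, sin_zero, sin_pi_div_two]
    linarith

/-- The set `S₊` with the interval `(0, c)` in place of `(0, π / 2)`. -/
def boundedAwayData (c : ℝ) (u : ℝ → ℝ → ℝ) : Set ℝ :=
  {y | y ∈ Ioo 0 c ∧ ∃ ε > 0, ∀ r, 0 ≤ r → ε ≤ u y r}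

section ShootingFamily

variable {ν θ c y : ℝ} {f G : ℝ → ℝ} {u : ℝ → ℝ → ℝ}

theorem IsPotentialWell.deriv_zeros_of_mem_boundedAwayData (hν : 0 ≤ ν)
    (hW : IsPotentialWell f G θ c) (hf : Continuous f)
    (hu : IsDampedSolution ν f (u y)) (h0 : u y 0 = y) (hy : y ∈ boundedAwayData c u) :
    (∃ r > 0, deriv (u y) r = 0) ∧
      ∀ r, 0 < r → deriv (u y) r = 0 → energy G (u y) r < G 0 := by
  obtain ⟨hyI, ε, hε, hle⟩ := hy
  rw [← h0] at hyI
  exact ⟨hW.exists_deriv_eq_zero hν hu hyI hf hε hle, fun r hr hr' =>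
    hW.energy_lt_of_deriv_eq_zero hν hu hyI hr (fun s hs => hε.trans_le (hle s hs.1)) hr'⟩

theorem IsPotentialWell.isOpen_boundedAwayData {K : ℝ≥0} (hν : 0 ≤ ν)
    (hW : IsPotentialWell f G θ c) (hf : LipschitzWith K f)
    (hu : ∀ y ∈ Ioo 0 c, IsDampedSolution ν f (u y) ∧ u y 0 = y) :
    IsOpen (boundedAwayData c u) := by
  refine isOpen_iff_mem_nhds.2 fun y hy => ?_
  obtain ⟨⟨R, hR, hR'⟩, henergy⟩ := hW.deriv_zeros_of_mem_boundedAwayData hν hf.continuous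
    (hu y hy.1).1 (hu y hy.1).2 hy
  obtain ⟨hyI, ε, hε, hle⟩ := hy
  have hnear : ∀ᶠ z in 𝓝 y, z ∈ Ioo 0 c := isOpen_Ioo.mem_nhds hyI
  exact hnear.and (IsDampedSolution.eventually_exists_forall_le hν hf hW.hasDerivAt
    (hnear.mono hu) hε hle hR.le (henergy R hR hR'))

theorem Splus_properties_general {K : ℝ≥0} (hν : 0 ≤ ν) (hf : LipschitzWith K f)
    (hW : IsPotentialWell f G θ c) (hu : ∀ y ∈ Ioo 0 c, IsDampedSolution ν f (u y) ∧ u y 0 = y)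
    (hy : y ∈ boundedAwayData c u) :
    (∃ r > 0, deriv (u y) r = 0) ∧
    (∀ r, 0 < r → deriv (u y) r = 0 → energy G (u y) r < G 0) ∧
    IsOpen (boundedAwayData c u) :=
  have ⟨hu₀, h0⟩ := hu y hy.1
  and_assoc.1 ⟨hW.deriv_zeros_of_mem_boundedAwayData hν hf.continuous hu₀ h0 hy,
    hW.isOpen_boundedAwayData hν hf hu⟩

end ShootingFamily

end

theorem Splus_properties (d : ℕ) (hd : 2 ≤ d) (a b : ℝ)
    (hb : 0 < b) (hab : 2 * b < a)
    (u : ℝ → ℝ → ℝ) (hfam : IsShootingFamily d a b u)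
    (y : ℝ) (hy : y ∈ Splus u) (hy' : y ≠ Real.arcsin (Real.sqrt (b / a))) :
    (∃ r > (0 : ℝ), deriv (u y) r = 0) ∧
    (∀ r' : ℝ, 0 < r' → deriv (u y) r' = 0 →
      (∀ s : ℝ, 0 < s → s < r' → deriv (u y) s ≠ 0) →
      Hloc a b (u y) r' < 0) ∧
    IsOpen (Splus u) := by
  obtain ⟨hzero, henergy, hopen⟩ := Splus_properties_general (ν := d - 1)
    (sub_nonneg.2 (Nat.one_le_cast.2 (one_le_two.trans hd))) (lipschitzWith_Fnl a b)
    (isPotentialWell_Fnl hb hab)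
    (fun z hz => (hfam z hz).imp_left isRadialSol_iff_isDampedSolution.1) hy
  exact ⟨hzero, fun r hr hr' _ =>
    by simpa [Hloc_eq_energy, Gpot] using henergy r hr hr', hopen⟩
end
end

section
/- Let d ≥ 2 and a > 2b > 0. Assume y ∈ S₀ and that the solution v_y of the linearized equation satisfies v_y(r) → −∞ and v_y'(r) → −∞ as r → ∞. Then there exists ε > 0 such that (y − ε, y) ⊂ S₊ and (y, y + ε) ⊂ S₋. -/
open Real Filter

noncomputable section

/-- `v` solves the linearized equation `v'' + ((d−1)/r)v' + F'(w)v = 0`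
with `v(0) = 1`, `v'(0) = 0`. -/
def IsLinearizedSol (d : ℕ) (a b : ℝ) (w v : ℝ → ℝ) : Prop :=
  ContDiff ℝ 2 v ∧ v 0 = 1 ∧ deriv v 0 = 0 ∧
  ∀ r : ℝ, 0 < r →
    deriv (deriv v) r + (((d : ℝ) - 1) / r) * deriv v r
      + deriv (Fnl a b) (w r) * v r = 0

/-! By Gronwall's inequality, `x ↦ u x R` and `x ↦ deriv (u x) R` are differentiable at `y`, with
derivatives `v R` and `deriv v R`. Near `0` the nonlinearity `f` is decreasing, so that, writing the
equation in divergence form `(rᵏ z')' = -rᵏ g` with `k = d - 1`, the gap between two ordered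
solutions whose slopes are ordered the same way keeps growing as long as both stay in that region.

Choose `R` so large that `u y` stays in that region and decreases from `R` on, and that `v R` and
`deriv v R` are negative. For `x` slightly above `y`, the solution `u x` then lies below `u y` at
`R`, with smaller slope; since `u y` tends to `0` and the gap does not close, `u x` must vanish.
For `x` slightly below `y`, the solution `u x` lies above `u y` at `R` by a gap which grows as long
as `u x` decreases. If `u x` ever stops decreasing, its energy `z' ^ 2 / 2 + potential f z` is
negative there; the energy is nonincreasing and the potential vanishes at `0`, so that `u x` is
trapped away from `0`. -/

open Set Topology
open scoped NNReal

section RealFunctions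

variable {g : ℝ → ℝ} {g' x₀ : ℝ}

lemma eventually_nhdsGT_lt_of_hasDerivAt_neg (hg : HasDerivAt g g' x₀) (hneg : g' < 0) :
    ∀ᶠ x in 𝓝[>] x₀, g x < g x₀ := by
  filter_upwards [hg.hasDerivWithinAt.limsup_slope_le' (lt_irrefl x₀) hneg,
    self_mem_nhdsWithin] with x hslope hx
  rw [slope_def_field, div_neg_iff] at hslope
  have hx : 0 < x - x₀ := sub_pos.2 hx
  rcases hslope with h | h <;> linarith

lemma eventually_nhdsLT_gt_of_hasDerivAt_neg (hg : HasDerivAt g g' x₀) (hneg : g' < 0) :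
    ∀ᶠ x in 𝓝[<] x₀, g x₀ < g x := by
  filter_upwards [hg.hasDerivWithinAt.limsup_slope_le' (lt_irrefl x₀) hneg,
    self_mem_nhdsWithin] with x hslope hx
  rw [slope_def_field, div_neg_iff] at hslope
  have hx : x - x₀ < 0 := sub_neg.2 hx
  rcases hslope with h | h <;> linarith

lemma hasDerivAt_of_eventually_sq_error_le {C : ℝ}
    (h : ∀ᶠ x in 𝓝 x₀, (g x - g x₀ - (x - x₀) * g') ^ 2 ≤ C * (x - x₀) ^ 4) :
    HasDerivAt g g' x₀ := by
  have hbigO : (fun x => g x - g x₀ - (x - x₀) * g') =O[𝓝 x₀] fun x => (x - x₀) ^ 2 := by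
    refine Asymptotics.IsBigO.of_bound √C ?_
    filter_upwards [h] with x hx
    rw [norm_eq_abs, norm_eq_abs, abs_of_nonneg (sq_nonneg (x - x₀))]
    calc |g x - g x₀ - (x - x₀) * g'| ≤ √(C * ((x - x₀) ^ 2) ^ 2) :=
          abs_le_sqrt (by rwa [← pow_mul])
      _ = √C * (x - x₀) ^ 2 := by rw [sqrt_mul' _ (sq_nonneg _), sqrt_sq (sq_nonneg _)]
  rw [hasDerivAt_iff_isLittleO]
  exact hbigO.trans_isLittleO (by
    simpa only [norm_eq_abs, sq_abs] using Asymptotics.isLittleO_pow_sub_sub x₀ one_lt_two)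

lemma exists_first_zero (hg : Continuous g) {R T : ℝ} (hRT : R ≤ T) (hR : 0 < g R)
    (hT : g T ≤ 0) : ∃ S ∈ Ioc R T, g S = 0 ∧ ∀ r ∈ Ico R S, 0 < g r := by
  have hcompact : IsCompact (Icc R T ∩ g ⁻¹' {0}) :=
    isCompact_Icc.inter_right (isClosed_singleton.preimage hg)
  obtain ⟨S₀, hS₀, hzero⟩ := intermediate_value_Icc' hRT hg.continuousOn ⟨hT, hR.le⟩
  obtain ⟨S, ⟨⟨hRS, hST⟩, hS⟩, hleast⟩ := hcompact.exists_isLeast ⟨S₀, hS₀, hzero⟩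
  have hS : g S = 0 := hS
  refine ⟨S, ⟨lt_of_le_of_ne hRS (by rintro rfl; exact hR.ne' hS), hST⟩, hS, fun r hr => ?_⟩
  by_contra! hneg
  obtain ⟨s, hs, hszero⟩ := intermediate_value_Icc' hr.1 hg.continuousOn ⟨hneg, hR.le⟩
  have hSs : S ≤ s := hleast ⟨⟨hs.1, hs.2.trans (hr.2.le.trans hST)⟩, hszero⟩
  exact (hSs.trans hs.2).not_gt hr.2

lemma pos_of_forall_ne_zero (hg : Continuous g) {R : ℝ} (hR : 0 < g R)
    (hne : ∀ r > R, g r ≠ 0) : ∀ r ≥ R, 0 < g r := by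
  intro r hr
  by_contra! hneg
  obtain ⟨S, hS, hzero, -⟩ := exists_first_zero hg hr hR hneg
  exact hne S hS.1 hzero

lemma exists_pos_forall_Icc_le (hg : Continuous g) {R : ℝ} (hpos : ∀ r ∈ Icc 0 R, 0 < g r) :
    ∃ m > 0, ∀ r ∈ Icc 0 R, m ≤ g r := by
  rcases (Icc 0 R).eq_empty_or_nonempty with hempty | hne
  · exact ⟨1, one_pos, by simp [hempty]⟩
  · obtain ⟨x, hx, hmin⟩ := isCompact_Icc.exists_isMinOn hne hg.continuousOn
    exact ⟨g x, hpos x hx, hmin⟩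

lemma exists_pos_forall_nonneg_le (hg : Continuous g) {S m : ℝ}
    (hpos : ∀ r ∈ Icc 0 S, 0 < g r) (hm : 0 < m) (htail : ∀ r ≥ S, m ≤ g r) :
    ∃ ε > 0, ∀ r ≥ 0, ε ≤ g r := by
  obtain ⟨m₀, hm₀, hle⟩ := exists_pos_forall_Icc_le hg hpos
  refine ⟨min m₀ m, lt_min hm₀ hm, fun r hr => ?_⟩
  rcases le_total r S with h | h
  · exact (min_le_left _ _).trans (hle r ⟨hr, h⟩)
  · exact (min_le_right _ _).trans (htail r h)

lemma abs_sub_linearization_le {f : ℝ → ℝ} {M : ℝ≥0} (hf : Differentiable ℝ f)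
    (hM : LipschitzWith M (deriv f)) (x y : ℝ) :
    |f x - f y - deriv f y * (x - y)| ≤ M * (x - y) ^ 2 := by
  have hderiv : ∀ t ∈ uIcc y x,
      HasDerivWithinAt (fun t => f t - deriv f y * t) (deriv f t - deriv f y) (uIcc y x) t :=
    fun t _ => by
      simpa using ((hf t).hasDerivAt.fun_sub
        ((hasDerivAt_id t).const_mul (deriv f y))).hasDerivWithinAt
  have hbound : ∀ t ∈ uIcc y x, ‖deriv f t - deriv f y‖ ≤ M * |x - y| := fun t ht =>
    (hM.norm_sub_le t y).trans (by gcongr; exact abs_sub_left_of_mem_uIcc ht)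
  have hmvt := (convex_uIcc y x).norm_image_sub_le_of_norm_hasDerivWithin_le hderiv hbound
    left_mem_uIcc right_mem_uIcc
  calc |f x - f y - deriv f y * (x - y)|
      = ‖f x - deriv f y * x - (f y - deriv f y * y)‖ := by rw [norm_eq_abs]; ring_nf
    _ ≤ M * |x - y| * ‖x - y‖ := hmvt
    _ = M * (x - y) ^ 2 := by rw [norm_eq_abs, mul_assoc, abs_mul_abs_self, sq]

lemma exists_lipschitzWith_of_periodic {c : ℝ} (hg : ContDiff ℝ 1 g)
    (hper : Function.Periodic g c) (hc : c ≠ 0) : ∃ L : ℝ≥0, LipschitzWith L g := by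
  have hper' : Function.Periodic (deriv g) c := fun x => by
    rw [← deriv_comp_add_const, funext hper]
  obtain ⟨L, hL⟩ :=
    (hper'.isBounded_of_continuous hc (hg.continuous_deriv le_rfl)).exists_norm_le
  refine ⟨L.toNNReal, lipschitzWith_of_nnnorm_deriv_le (hg.differentiable one_ne_zero)
    fun x => ?_⟩
  exact NNReal.coe_le_coe.1 ((hL _ (mem_range_self x)).trans (le_coe_toNNReal L))

lemma exists_strictAntiOn_Icc_zero (hg : ContDiff ℝ 1 g) (hneg : deriv g 0 < 0) :
    ∃ δ > 0, StrictAntiOn g (Icc 0 δ) := by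
  have hev : ∀ᶠ x in 𝓝 0, deriv g x < 0 :=
    (hg.continuous_deriv le_rfl).continuousAt.eventually_lt_const hneg
  obtain ⟨δ, hδ, h⟩ := (mem_nhdsGE_iff_exists_Icc_subset).1 (mem_nhdsWithin_of_mem_nhds hev)
  refine ⟨δ, hδ, strictAntiOn_of_deriv_neg (convex_Icc _ _) hg.continuous.continuousOn ?_⟩
  exact fun x hx => h (interior_subset hx)

lemma exists_pos_Ioo_subset {s t : Set ℝ} (hs : s ∈ 𝓝[<] x₀) (ht : t ∈ 𝓝[>] x₀) :
    ∃ ε > 0, Ioo (x₀ - ε) x₀ ⊆ s ∧ Ioo x₀ (x₀ + ε) ⊆ t := by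
  obtain ⟨l, hl, hls⟩ := mem_nhdsLT_iff_exists_Ioo_subset.1 hs
  obtain ⟨u, hu, hut⟩ := mem_nhdsGT_iff_exists_Ioo_subset.1 ht
  refine ⟨min (x₀ - l) (u - x₀), lt_min (sub_pos.2 hl) (sub_pos.2 hu), ?_, ?_⟩
  · exact (Ioo_subset_Ioo_left (by linarith [min_le_left (x₀ - l) (u - x₀)])).trans hls
  · exact (Ioo_subset_Ioo_right (by linarith [min_le_right (x₀ - l) (u - x₀)])).trans hut

end RealFunctions

section Potential

/-- The potential of the nonlinearity `f`, normalized to vanish at `0`. With this sign,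
`z' ^ 2 / 2 + potential f z` is the energy of a solution of `z'' + (k / r) z' + f z = 0`. -/
def potential (f : ℝ → ℝ) (x : ℝ) : ℝ := ∫ t in 0..x, f t

variable {f : ℝ → ℝ}

lemma potential_zero : potential f 0 = 0 := intervalIntegral.integral_same

lemma hasDerivAt_potential (hf : Continuous f) (x : ℝ) : HasDerivAt (potential f) (f x) x :=
  (hf.integral_hasStrictDerivAt 0 x).hasDerivAt

lemma potential_neg {δ : ℝ} (hf : Continuous f) (hanti : StrictAntiOn f (Icc 0 δ))
    (hf0 : f 0 = 0) {x : ℝ} (hx : x ∈ Ioc 0 δ) : potential f x < 0 := by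
  have hδ : 0 ≤ δ := hx.1.le.trans hx.2
  have hcont : Continuous (potential f) :=
    continuous_iff_continuousAt.2 fun t => (hasDerivAt_potential hf t).continuousAt
  have hstrict : StrictAntiOn (potential f) (Icc 0 δ) := by
    refine strictAntiOn_of_deriv_neg (convex_Icc _ _) hcont.continuousOn fun t ht => ?_
    rw [interior_Icc] at ht
    rw [(hasDerivAt_potential hf t).deriv, ← hf0]
    exact hanti (left_mem_Icc.2 hδ) (Ioo_subset_Icc_self ht) ht.1
  simpa only [potential_zero] using
    hstrict (left_mem_Icc.2 hδ) (Ioc_subset_Icc_self hx) hx.1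

end Potential

/-- `z` is a solution, regular at the origin, of the radial equation
`z'' + (k / r) z' + g = 0` on `(0, ∞)` with forcing `g`. The forcing may depend on `z`: the
semilinear and linearized equations, and those for differences of solutions, all have this form. -/
structure IsForcedRadialSol (k : ℝ) (g z : ℝ → ℝ) : Prop where
  contDiff : ContDiff ℝ 2 z
  deriv_zero : deriv z 0 = 0
  ode : ∀ r > 0, deriv (deriv z) r + k / r * deriv z r + g r = 0

namespace IsForcedRadialSol

section Forced

variable {k : ℝ} {g z : ℝ → ℝ}

lemma hasDerivAt (hz : IsForcedRadialSol k g z) (r : ℝ) : HasDerivAt z (deriv z r) r :=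
  (hz.contDiff.differentiable two_ne_zero r).hasDerivAt

lemma contDiff_deriv (hz : IsForcedRadialSol k g z) : ContDiff ℝ 1 (deriv z) :=
  ((contDiff_succ_iff_deriv (n := 1)).1 (by simpa [one_add_one_eq_two] using hz.contDiff)).2.2

lemma hasDerivAt_deriv (hz : IsForcedRadialSol k g z) (r : ℝ) :
    HasDerivAt (deriv z) (deriv (deriv z) r) r :=
  (hz.contDiff_deriv.differentiable one_ne_zero r).hasDerivAt

lemma sub {h w : ℝ → ℝ} (hz : IsForcedRadialSol k g z) (hw : IsForcedRadialSol k h w) :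
    IsForcedRadialSol k (g - h) (z - w) := by
  have hderiv : deriv (z - w) = deriv z - deriv w :=
    funext fun r => ((hz.hasDerivAt r).sub (hw.hasDerivAt r)).deriv
  refine ⟨hz.contDiff.sub hw.contDiff, ?_, fun r hr => ?_⟩
  · simp only [hderiv, Pi.sub_apply, hz.deriv_zero, hw.deriv_zero, sub_zero]
  · rw [hderiv, ((hz.hasDerivAt_deriv r).sub (hw.hasDerivAt_deriv r)).deriv]
    simp only [Pi.sub_apply]
    linear_combination hz.ode r hr - hw.ode r hr

lemma const_smul (hz : IsForcedRadialSol k g z) (c : ℝ) :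
    IsForcedRadialSol k (c • g) (c • z) := by
  have hderiv : deriv (c • z) = c • deriv z :=
    funext fun r => ((hz.hasDerivAt r).const_smul c).deriv
  refine ⟨hz.contDiff.const_smul c, ?_, fun r hr => ?_⟩
  · simp only [hderiv, Pi.smul_apply, hz.deriv_zero, smul_zero]
  · rw [hderiv, ((hz.hasDerivAt_deriv r).const_smul c).deriv]
    simp only [Pi.smul_apply, smul_eq_mul]
    linear_combination c * hz.ode r hr

lemma hasDerivAt_rpow_mul_deriv (hz : IsForcedRadialSol k g z) {r : ℝ} (hr : 0 < r) :
    HasDerivAt (fun r => r ^ k * deriv z r) (-(r ^ k * g r)) r := by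
  refine ((hasDerivAt_rpow_const (.inl hr.ne')).mul (hz.hasDerivAt_deriv r)).congr_deriv ?_
  rw [rpow_sub_one hr.ne']
  linear_combination r ^ k * hz.ode r hr

lemma monotoneOn_of_deriv_pos (hz : IsForcedRadialSol k g z) {R T : ℝ}
    (hpos : ∀ r ∈ Ico R T, 0 < deriv z r) : MonotoneOn z (Icc R T) := by
  refine (strictMonoOn_of_deriv_pos (convex_Icc _ _) hz.contDiff.continuous.continuousOn
    fun r hr => hpos r ?_).monotoneOn
  rw [interior_Icc] at hr
  exact Ioo_subset_Ico_self hr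

lemma antitoneOn_of_deriv_neg (hz : IsForcedRadialSol k g z) {R T : ℝ}
    (hneg : ∀ r ∈ Ico R T, deriv z r < 0) : AntitoneOn z (Icc R T) := by
  refine (strictAntiOn_of_deriv_neg (convex_Icc _ _) hz.contDiff.continuous.continuousOn
    fun r hr => hneg r ?_).antitoneOn
  rw [interior_Icc] at hr
  exact Ioo_subset_Ico_self hr

theorem monotoneOn_of_forcing_nonpos (hz : IsForcedRadialSol k g z) {R T : ℝ} (hR : 0 < R)
    (hg : ∀ r ∈ Icc R T, 0 < z r → g r ≤ 0) (hzR : 0 < z R) (hzR' : 0 < deriv z R) :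
    MonotoneOn z (Icc R T) := by
  suffices hpos : ∀ r ∈ Ico R T, 0 < deriv z r from hz.monotoneOn_of_deriv_pos hpos
  intro r hr
  by_contra! hneg
  obtain ⟨S, hS, hzero, hpos⟩ :=
    exists_first_zero hz.contDiff_deriv.continuous hr.1 hzR' hneg
  have hmono : MonotoneOn z (Icc R S) := hz.monotoneOn_of_deriv_pos hpos
  have hflux : MonotoneOn (fun r => r ^ k * deriv z r) (Icc R S) := by
    have hderiv : ∀ s ∈ Icc R S, HasDerivAt (fun r => r ^ k * deriv z r) (-(s ^ k * g s)) s :=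
      fun s hs => hz.hasDerivAt_rpow_mul_deriv (hR.trans_le hs.1)
    refine monotoneOn_of_hasDerivWithinAt_nonneg (convex_Icc _ _)
      (fun s hs => (hderiv s hs).continuousAt.continuousWithinAt)
      (fun s hs => (hderiv s (interior_subset hs)).hasDerivWithinAt) fun s hs => ?_
    have hs : s ∈ Icc R S := interior_subset hs
    have hzs : 0 < z s := hzR.trans_le (hmono (left_mem_Icc.2 hS.1.le) hs hs.1)
    have hgs : g s ≤ 0 := hg s ⟨hs.1, hs.2.trans (hS.2.trans hr.2.le)⟩ hzs
    exact neg_nonneg.2 (mul_nonpos_of_nonneg_of_nonpos (rpow_nonneg (hR.le.trans hs.1) k) hgs)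
  have hle : R ^ k * deriv z R ≤ S ^ k * deriv z S :=
    hflux (left_mem_Icc.2 hS.1.le) (right_mem_Icc.2 hS.1.le) hS.1.le
  rw [hzero, mul_zero] at hle
  exact hle.not_gt (mul_pos (rpow_pos_of_pos hR k) hzR')

theorem sq_add_sq_deriv_le_gronwallBound (hz : IsForcedRadialSol k g z) (hk : 0 ≤ k)
    {L e R : ℝ} (hL : 0 ≤ L) (hg : ∀ r ∈ Ioo 0 R, |g r| ≤ L * |z r| + e) :
    ∀ r ∈ Icc 0 R, z r ^ 2 + deriv z r ^ 2 ≤ gronwallBound (z 0 ^ 2) (2 + L) (e ^ 2) r := by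
  have hderiv : ∀ r, HasDerivAt (fun r => z r ^ 2 + deriv z r ^ 2)
      (2 * z r * deriv z r + 2 * deriv z r * deriv (deriv z) r) r := fun r => by
    simpa using ((hz.hasDerivAt r).fun_pow 2).fun_add ((hz.hasDerivAt_deriv r).fun_pow 2)
  have hbound : ∀ r ∈ Ico 0 R, 2 * z r * deriv z r + 2 * deriv z r * deriv (deriv z) r ≤
      (2 + L) * (z r ^ 2 + deriv z r ^ 2) + e ^ 2 := by
    rintro r ⟨hr₀, hrR⟩
    rcases hr₀.eq_or_lt with rfl | hr
    · rw [hz.deriv_zero]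
      nlinarith [sq_nonneg (z 0), sq_nonneg e]
    have hdamp : 0 ≤ k / r * deriv z r ^ 2 := by positivity
    have hforce : -(deriv z r * g r) ≤ |deriv z r| * (L * |z r| + e) := by
      calc -(deriv z r * g r) ≤ |deriv z r| * |g r| := by
            rw [← abs_mul]; exact neg_le_abs _
        _ ≤ |deriv z r| * (L * |z r| + e) := by gcongr; exact hg r ⟨hr, hrR⟩
    have hamgm : L * (2 * |z r| * |deriv z r|) ≤ L * (z r ^ 2 + deriv z r ^ 2) := by
      gcongr
      simpa only [sq_abs] using two_mul_le_add_sq |z r| |deriv z r|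
    have hamgm_e : 2 * |deriv z r| * e ≤ deriv z r ^ 2 + e ^ 2 := by
      simpa only [sq_abs] using two_mul_le_add_sq |deriv z r| e
    have hode : deriv z r * deriv (deriv z) r = -(k / r * deriv z r ^ 2) - deriv z r * g r := by
      linear_combination deriv z r * hz.ode r hr
    linarith [two_mul_le_add_sq (z r) (deriv z r), sq_nonneg (z r)]
  intro r hr
  simpa only [sub_zero] using le_gronwallBound_of_liminf_deriv_right_le
    (fun s _ => (hderiv s).continuousAt.continuousWithinAt)
    (fun s _ c hc => (hderiv s).hasDerivWithinAt.liminf_right_slope_le hc)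
    (by simp [hz.deriv_zero]) hbound r hr

end Forced

section Autonomous

variable {k : ℝ} {f p w : ℝ → ℝ}

lemma antitoneOn_energy (hp : IsForcedRadialSol k (f ∘ p) p) (hk : 0 ≤ k) (hf : Continuous f) :
    AntitoneOn (fun r => deriv p r ^ 2 / 2 + potential f (p r)) (Ici 0) := by
  have hderiv : ∀ r, HasDerivAt (fun r => deriv p r ^ 2 / 2 + potential f (p r))
      (deriv p r * (deriv (deriv p) r + f (p r))) r := fun r => by
    refine ((((hp.hasDerivAt_deriv r).fun_pow 2).div_const 2).fun_add
      ((hasDerivAt_potential hf (p r)).comp r (hp.hasDerivAt r))).congr_deriv ?_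
    ring
  refine antitoneOn_of_hasDerivWithinAt_nonpos (convex_Ici 0)
    (fun r _ => (hderiv r).continuousAt.continuousWithinAt)
    (fun r _ => (hderiv r).hasDerivWithinAt) fun r hr => ?_
  rw [interior_Ici] at hr
  have hr : 0 < r := hr
  have hode : deriv (deriv p) r + k / r * deriv p r + f (p r) = 0 := hp.ode r hr
  calc deriv p r * (deriv (deriv p) r + f (p r)) = -(k / r * deriv p r ^ 2) := by
        linear_combination deriv p r * hode
    _ ≤ 0 := neg_nonpos.2 (by positivity)

theorem exists_pos_le_of_deriv_eq_zero (hp : IsForcedRadialSol k (f ∘ p) p) (hk : 0 ≤ k)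
    (hf : Continuous f) {R : ℝ} (hR : 0 ≤ R) (hR' : deriv p R = 0) (hpR : 0 < p R)
    (hneg : potential f (p R) < 0) : ∃ m > 0, ∀ r ≥ R, m ≤ p r := by
  have hwell : ∀ᶠ x in 𝓝 0, potential f (p R) < potential f x :=
    (hasDerivAt_potential hf 0).continuousAt.eventually_const_lt (by rwa [potential_zero])
  obtain ⟨m, hm, hmwell⟩ := Metric.eventually_nhds_iff.1 hwell
  have htrapped : ∀ r ≥ R, m ≤ |p r| := by
    intro r hr
    by_contra! hlt
    have henergy : deriv p r ^ 2 / 2 + potential f (p r) ≤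
        deriv p R ^ 2 / 2 + potential f (p R) :=
      hp.antitoneOn_energy hk hf hR (hR.trans hr) hr
    have hhigh : potential f (p R) < potential f (p r) := hmwell (by simpa using hlt)
    rw [hR'] at henergy
    linarith [sq_nonneg (deriv p r)]
  have hpos : ∀ r ≥ R, 0 < p r := pos_of_forall_ne_zero hp.contDiff.continuous hpR
    fun r hr => abs_pos.1 (hm.trans_le (htrapped r hr.le))
  exact ⟨m, hm, fun r hr => abs_of_pos (hpos r hr) ▸ htrapped r hr⟩

theorem monotoneOn_sub_of_antitoneOn {δ R T : ℝ} (hp : IsForcedRadialSol k (f ∘ p) p)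
    (hw : IsForcedRadialSol k (f ∘ w) w) (hanti : AntitoneOn f (Icc 0 δ)) (hR : 0 < R)
    (hnonneg : ∀ r ∈ Icc R T, 0 ≤ w r) (hle : ∀ r ∈ Icc R T, p r ≤ δ)
    (hlt : w R < p R) (hlt' : deriv w R < deriv p R) : MonotoneOn (p - w) (Icc R T) := by
  refine (hp.sub hw).monotoneOn_of_forcing_nonpos hR (fun r hr hpos => ?_) (sub_pos.2 hlt) ?_
  · have hwp : w r ≤ p r := (sub_pos.1 hpos).le
    exact sub_nonpos.2 (hanti ⟨hnonneg r hr, hwp.trans (hle r hr)⟩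
      ⟨(hnonneg r hr).trans hwp, hle r hr⟩ hwp)
  · rw [((hp.hasDerivAt R).sub (hw.hasDerivAt R)).deriv]
    exact sub_pos.2 hlt'

theorem exists_zero_of_lt_of_tendsto_zero {δ R : ℝ} (hp : IsForcedRadialSol k (f ∘ p) p)
    (hw : IsForcedRadialSol k (f ∘ w) w) (hanti : AntitoneOn f (Icc 0 δ)) (hR : 0 < R)
    (hwδ : ∀ r ≥ R, w r ≤ δ) (hwlim : Tendsto w atTop (𝓝 0)) (hp0 : 0 < p 0)
    (hlt : p R < w R) (hlt' : deriv p R < deriv w R) : ∃ r > 0, p r = 0 := by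
  by_contra! hne
  have hpos : ∀ r ≥ 0, 0 < p r := pos_of_forall_ne_zero hp.contDiff.continuous hp0 hne
  have hgap : ∀ r ≥ R, w R - p R ≤ w r - p r := fun r hr =>
    hw.monotoneOn_sub_of_antitoneOn hp hanti hR (fun s hs => (hpos s (hR.le.trans hs.1)).le)
      (fun s hs => hwδ s hs.1) hlt hlt' (left_mem_Icc.2 hr) (right_mem_Icc.2 hr) hr
  obtain ⟨r, hwr, hr⟩ :=
    ((hwlim.eventually_lt_const (sub_pos.2 hlt)).and (eventually_ge_atTop R)).exists
  linarith [hgap r hr, hpos r (hR.le.trans hr)]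

theorem exists_pos_le_of_gt {δ R : ℝ} (hp : IsForcedRadialSol k (f ∘ p) p)
    (hw : IsForcedRadialSol k (f ∘ w) w) (hk : 0 ≤ k) (hf : Continuous f) (hf0 : f 0 = 0)
    (hanti : StrictAntiOn f (Icc 0 δ)) (hR : 0 < R) (hwpos : ∀ r ≥ R, 0 < w r)
    (hppos : ∀ r ∈ Icc 0 R, 0 < p r) (hpδ : p R ≤ δ) (hpR' : deriv p R < 0)
    (hlt : w R < p R) (hlt' : deriv w R < deriv p R) : ∃ ε > 0, ∀ r ≥ 0, ε ≤ p r := by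
  have hdescent : ∀ T, (∀ r ∈ Ico R T, deriv p r < 0) →
      ∀ r ∈ Icc R T, p r ≤ δ ∧ p R - w R ≤ p r := by
    intro T hneg r hr
    have hle : ∀ s ∈ Icc R T, p s ≤ δ := fun s hs =>
      (hp.antitoneOn_of_deriv_neg hneg (left_mem_Icc.2 (hs.1.trans hs.2)) hs hs.1).trans hpδ
    have hgap : p R - w R ≤ p r - w r :=
      hp.monotoneOn_sub_of_antitoneOn hw hanti.antitoneOn hR (fun s hs => (hwpos s hs.1).le)
        hle hlt hlt' (left_mem_Icc.2 (hr.1.trans hr.2)) hr hr.1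
    exact ⟨hle r hr, hgap.trans (sub_le_self _ (hwpos r hr.1).le)⟩
  have hcont := hp.contDiff.continuous
  by_cases hdecr : ∀ r ≥ R, deriv p r < 0
  · exact exists_pos_forall_nonneg_le hcont hppos (sub_pos.2 hlt)
      fun r hr => (hdescent r (fun s hs => hdecr s hs.1) r (right_mem_Icc.2 hr)).2
  · push Not at hdecr
    obtain ⟨T, hRT, hT⟩ := hdecr
    obtain ⟨S, hS, hzero, hneg⟩ := exists_first_zero hp.contDiff_deriv.continuous.neg hRT
      (neg_pos.2 hpR') (neg_nonpos.2 hT)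
    have hdescentS := hdescent S fun r hr => neg_pos.1 (hneg r hr)
    have hpos : ∀ r ∈ Icc 0 S, 0 < p r := fun r hr => by
      rcases le_total r R with h | h
      · exact hppos r ⟨hr.1, h⟩
      · exact (sub_pos.2 hlt).trans_le (hdescentS r ⟨h, hr.2⟩).2
    have hS0 : 0 ≤ S := hR.le.trans hS.1.le
    have hpS : 0 < p S := hpos S (right_mem_Icc.2 hS0)
    obtain ⟨m, hm, htail⟩ := hp.exists_pos_le_of_deriv_eq_zero hk hf hS0 (neg_eq_zero.1 hzero) hpS
      (potential_neg hf hanti hf0 ⟨hpS, (hdescentS S (right_mem_Icc.2 hS.1.le)).1⟩)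
    exact exists_pos_forall_nonneg_le hcont hpos hm htail

theorem eventually_deriv_neg {δ : ℝ} (hw : IsForcedRadialSol k (f ∘ w) w) (hk : 0 ≤ k)
    (hf : Continuous f) (hf0 : f 0 = 0) (hδ : 0 < δ) (hanti : StrictAntiOn f (Icc 0 δ))
    (hpos : ∀ r ≥ 0, 0 < w r) (hlim : Tendsto w atTop (𝓝 0)) :
    ∀ᶠ r in atTop, deriv w r < 0 := by
  obtain ⟨R, hR⟩ := eventually_atTop.1
    ((hlim.eventually_lt_const hδ).and (eventually_ge_atTop 0))
  have hne : ∀ r ≥ R, deriv w r ≠ 0 := by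
    intro r hr hzero
    obtain ⟨hwδ, hr0⟩ := hR r hr
    obtain ⟨m, hm, hle⟩ := hw.exists_pos_le_of_deriv_eq_zero hk hf hr0 hzero (hpos r hr0)
      (potential_neg hf hanti hf0 ⟨hpos r hr0, hwδ.le⟩)
    exact hm.not_ge (ge_of_tendsto hlim (eventually_atTop.2 ⟨r, hle⟩))
  filter_upwards [eventually_ge_atTop R] with r hr
  refine (hne r hr).lt_of_le (not_lt.1 fun hr' => ?_)
  have hincr : ∀ s ≥ r, 0 < deriv w s := pos_of_forall_ne_zero hw.contDiff_deriv.continuous hr'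
    fun s hs => hne s (hr.trans hs.le)
  have hle : ∀ s ≥ r, w r ≤ w s := fun s hs =>
    hw.monotoneOn_of_deriv_pos (fun t ht => hincr t ht.1) (left_mem_Icc.2 hs)
      (right_mem_Icc.2 hs) hs
  exact (hpos r (hR r hr).2).not_ge (ge_of_tendsto hlim (eventually_atTop.2 ⟨r, hle⟩))

end Autonomous

section InitialData

variable {k : ℝ} {f p w v : ℝ → ℝ} {L M : ℝ≥0}

theorem sq_sub_add_sq_deriv_sub_le (hp : IsForcedRadialSol k (f ∘ p) p)
    (hw : IsForcedRadialSol k (f ∘ w) w) (hk : 0 ≤ k) (hL : LipschitzWith L f) {r : ℝ}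
    (hr : 0 ≤ r) :
    (p r - w r) ^ 2 + (deriv p r - deriv w r) ^ 2 ≤
      (p 0 - w 0) ^ 2 * exp ((2 + L) * r) := by
  have hforce : ∀ s ∈ Ioo 0 r, |(f ∘ p - f ∘ w) s| ≤ L * |(p - w) s| + 0 := fun s _ => by
    simpa using hL.norm_sub_le (p s) (w s)
  have hgronwall := (hp.sub hw).sq_add_sq_deriv_le_gronwallBound hk L.coe_nonneg hforce r
    (right_mem_Icc.2 hr)
  rw [((hp.hasDerivAt r).sub (hw.hasDerivAt r)).deriv, zero_pow two_ne_zero,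
    gronwallBound_ε0] at hgronwall
  exact hgronwall

theorem sq_linearization_error_le (hp : IsForcedRadialSol k (f ∘ p) p)
    (hw : IsForcedRadialSol k (f ∘ w) w)
    (hv : IsForcedRadialSol k (fun r => deriv f (w r) * v r) v) (hv0 : v 0 = 1) (hk : 0 ≤ k)
    (hf : Differentiable ℝ f) (hL : LipschitzWith L f) (hM : LipschitzWith M (deriv f))
    {r : ℝ} (hr : 0 ≤ r) :
    (p r - w r - (p 0 - w 0) * v r) ^ 2 + (deriv p r - deriv w r - (p 0 - w 0) * deriv v r) ^ 2 ≤
      gronwallBound 0 (2 + L) ((M * ((p 0 - w 0) ^ 2 * exp ((2 + L) * r))) ^ 2) r := by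
  set h : ℝ := p 0 - w 0 with hh
  have hz := (hp.sub hw).sub (hv.const_smul h)
  have hforce : ∀ s ∈ Ioo 0 r, |(f ∘ p - f ∘ w - h • fun r => deriv f (w r) * v r) s| ≤
      L * |(p - w - h • v) s| + M * (h ^ 2 * exp ((2 + L) * r)) := by
    intro s hs
    have hclose : (p s - w s) ^ 2 ≤ h ^ 2 * exp ((2 + L) * r) := calc
      (p s - w s) ^ 2 ≤ (p s - w s) ^ 2 + (deriv p s - deriv w s) ^ 2 :=
        le_add_of_nonneg_right (sq_nonneg _)
      _ ≤ h ^ 2 * exp ((2 + L) * s) := hp.sq_sub_add_sq_deriv_sub_le hw hk hL hs.1.le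
      _ ≤ h ^ 2 * exp ((2 + L) * r) := by gcongr; exact hs.2.le
    calc |f (p s) - f (w s) - h * (deriv f (w s) * v s)|
        = |deriv f (w s) * (p s - w s - h * v s) +
            (f (p s) - f (w s) - deriv f (w s) * (p s - w s))| := by ring_nf
      _ ≤ |deriv f (w s)| * |p s - w s - h * v s| +
            |f (p s) - f (w s) - deriv f (w s) * (p s - w s)| := by
          rw [← abs_mul]; exact abs_add_le _ _
      _ ≤ L * |p s - w s - h * v s| + M * (p s - w s) ^ 2 := by
          gcongr
          · exact norm_deriv_le_of_lipschitz hL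
          · exact abs_sub_linearization_le hf hM _ _
      _ ≤ L * |p s - w s - h * v s| + M * (h ^ 2 * exp ((2 + L) * r)) := by gcongr
  have hgronwall := hz.sq_add_sq_deriv_le_gronwallBound hk L.coe_nonneg hforce r
    (right_mem_Icc.2 hr)
  have hinit : (p - w - h • v) 0 = 0 := by simp [hv0, hh]
  rw [(((hp.hasDerivAt r).sub (hw.hasDerivAt r)).sub ((hv.hasDerivAt r).const_smul h)).deriv,
    hinit, zero_pow two_ne_zero] at hgronwall
  exact hgronwall

end InitialData

end IsForcedRadialSol

section Shooting

variable {k : ℝ} {f v : ℝ → ℝ} {L M : ℝ≥0} {u : ℝ → ℝ → ℝ} {y : ℝ}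

theorem eventually_forall_Icc_pos (hk : 0 ≤ k) (hL : LipschitzWith L f)
    (hu : ∀ᶠ x in 𝓝 y, IsForcedRadialSol k (f ∘ u x) (u x) ∧ u x 0 = x) {R : ℝ}
    (hpos : ∀ r ∈ Icc 0 R, 0 < u y r) : ∀ᶠ x in 𝓝 y, ∀ r ∈ Icc 0 R, 0 < u x r := by
  obtain ⟨hw, hw0⟩ := hu.self_of_nhds
  obtain ⟨m, hm, hle⟩ := exists_pos_forall_Icc_le hw.contDiff.continuous hpos
  have hsmall : ∀ᶠ x in 𝓝 y, (x - y) ^ 2 * exp ((2 + L) * R) < m ^ 2 := by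
    have hcont : ContinuousAt (fun x => (x - y) ^ 2 * exp ((2 + L) * R)) y := by fun_prop
    exact hcont.eventually_lt_const (by simpa using pow_pos hm 2)
  filter_upwards [hu, hsmall] with x ⟨hp, hp0⟩ hx r hr
  have hclose : (u x r - u y r) ^ 2 < m ^ 2 := calc
    (u x r - u y r) ^ 2 ≤ (u x r - u y r) ^ 2 + (deriv (u x) r - deriv (u y) r) ^ 2 :=
      le_add_of_nonneg_right (sq_nonneg _)
    _ ≤ (x - y) ^ 2 * exp ((2 + L) * r) := by
      simpa only [hp0, hw0] using hp.sq_sub_add_sq_deriv_sub_le hw hk hL hr.1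
    _ ≤ (x - y) ^ 2 * exp ((2 + L) * R) := by gcongr; exact hr.2
    _ < m ^ 2 := hx
  linarith [(abs_lt_of_sq_lt_sq' hclose hm.le).1, hle r hr]

theorem hasDerivAt_initial_value (hk : 0 ≤ k) (hf : Differentiable ℝ f)
    (hL : LipschitzWith L f) (hM : LipschitzWith M (deriv f))
    (hu : ∀ᶠ x in 𝓝 y, IsForcedRadialSol k (f ∘ u x) (u x) ∧ u x 0 = x)
    (hv : IsForcedRadialSol k (fun r => deriv f (u y r) * v r) v) (hv0 : v 0 = 1) {r : ℝ}
    (hr : 0 ≤ r) :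
    HasDerivAt (fun x => u x r) (v r) y ∧
      HasDerivAt (fun x => deriv (u x) r) (deriv v r) y := by
  obtain ⟨hw, hw0⟩ := hu.self_of_nhds
  set C : ℝ := (M * exp ((2 + L) * r)) ^ 2 * ((exp ((2 + L) * r) - 1) / (2 + L))
  have hK : (2 + L : ℝ) ≠ 0 := by positivity
  have herror : ∀ᶠ x in 𝓝 y, (u x r - u y r - (x - y) * v r) ^ 2 +
      (deriv (u x) r - deriv (u y) r - (x - y) * deriv v r) ^ 2 ≤ C * (x - y) ^ 4 := by
    filter_upwards [hu] with x ⟨hp, hp0⟩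
    have hle := hp.sq_linearization_error_le hw hv hv0 hk hf hL hM hr
    rw [hp0, hw0, gronwallBound_of_K_ne_0 hK] at hle
    exact hle.trans_eq (by ring)
  constructor <;> refine hasDerivAt_of_eventually_sq_error_le (C := C) ?_ <;>
    filter_upwards [herror] with x hx
  · exact (le_add_of_nonneg_right (sq_nonneg _)).trans hx
  · exact (le_add_of_nonneg_left (sq_nonneg _)).trans hx

theorem exists_departure_radius {w : ℝ → ℝ} {δ : ℝ} (hk : 0 ≤ k) (hf : Continuous f)
    (hf0 : f 0 = 0) (hδ : 0 < δ) (hanti : StrictAntiOn f (Icc 0 δ))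
    (hw : IsForcedRadialSol k (f ∘ w) w) (hpos : ∀ r ≥ 0, 0 < w r)
    (hlim : Tendsto w atTop (𝓝 0)) (hneg : ∃ᶠ r in atTop, v r < 0 ∧ deriv v r < 0) :
    ∃ R > 0, (∀ r ≥ R, w r < δ) ∧ deriv w R < 0 ∧ v R < 0 ∧ deriv v R < 0 := by
  have hdecr : ∀ᶠ r in atTop, deriv w r < 0 := hw.eventually_deriv_neg hk hf hf0 hδ hanti hpos hlim
  have hsmall : ∀ᶠ R in atTop, ∀ r ≥ R, w r < δ :=
    eventually_forall_ge_atTop.2 (hlim.eventually_lt_const hδ)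
  obtain ⟨R, ⟨hvR, hvR'⟩, hR, hwR', hwδ⟩ :=
    (hneg.and_eventually ((eventually_gt_atTop 0).and (hdecr.and hsmall))).exists
  exact ⟨R, hR, hwδ, hwR', hvR, hvR'⟩

theorem shooting_transition (hk : 0 ≤ k) (hf : ContDiff ℝ 1 f) (hL : LipschitzWith L f)
    (hM : LipschitzWith M (deriv f)) (hf0 : f 0 = 0) (hf0' : deriv f 0 < 0)
    (hu : ∀ᶠ x in 𝓝 y, IsForcedRadialSol k (f ∘ u x) (u x) ∧ u x 0 = x)
    (hpos : ∀ r ≥ 0, 0 < u y r) (hlim : Tendsto (u y) atTop (𝓝 0))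
    (hv : IsForcedRadialSol k (fun r => deriv f (u y r) * v r) v) (hv0 : v 0 = 1)
    (hneg : ∃ᶠ r in atTop, v r < 0 ∧ deriv v r < 0) :
    (∀ᶠ x in 𝓝[<] y, ∃ ε > 0, ∀ r ≥ 0, ε ≤ u x r) ∧ ∀ᶠ x in 𝓝[>] y, ∃ r > 0, u x r = 0 := by
  obtain ⟨δ, hδ, hanti⟩ := exists_strictAntiOn_Icc_zero hf hf0'
  have hw : IsForcedRadialSol k (f ∘ u y) (u y) := hu.self_of_nhds.1
  obtain ⟨R, hR, hwδ, hwR', hvR, hvR'⟩ :=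
    exists_departure_radius hk hf.continuous hf0 hδ hanti hw hpos hlim hneg
  obtain ⟨hderiv, hderiv'⟩ :=
    hasDerivAt_initial_value hk (hf.differentiable one_ne_zero) hL hM hu hv hv0 hR.le
  have hpos' : ∀ᶠ x in 𝓝 y, ∀ r ∈ Icc 0 R, 0 < u x r :=
    eventually_forall_Icc_pos hk hL hu fun r hr => hpos r hr.1
  constructor
  · filter_upwards [hu.filter_mono nhdsWithin_le_nhds, hpos'.filter_mono nhdsWithin_le_nhds,
      (hderiv.continuousAt.eventually_lt_const (hwδ R le_rfl)).filter_mono nhdsWithin_le_nhds,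
      (hderiv'.continuousAt.eventually_lt_const hwR').filter_mono nhdsWithin_le_nhds,
      eventually_nhdsLT_gt_of_hasDerivAt_neg hderiv hvR,
      eventually_nhdsLT_gt_of_hasDerivAt_neg hderiv' hvR'] with x ⟨hp, _⟩ hppos hpδ hpR' hlt hlt'
    exact hp.exists_pos_le_of_gt hw hk hf.continuous hf0 hanti hR
      (fun r hr => hpos r (hR.le.trans hr)) hppos hpδ.le hpR' hlt hlt'
  · filter_upwards [hu.filter_mono nhdsWithin_le_nhds, hpos'.filter_mono nhdsWithin_le_nhds,
      eventually_nhdsGT_lt_of_hasDerivAt_neg hderiv hvR,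
      eventually_nhdsGT_lt_of_hasDerivAt_neg hderiv' hvR'] with x ⟨hp, _⟩ hppos hlt hlt'
    exact hp.exists_zero_of_lt_of_tendsto_zero hw hanti.antitoneOn hR (fun r hr => (hwδ r hr).le)
      hlim (hppos 0 ⟨le_rfl, hR.le⟩) hlt hlt'

end Shooting

section Fnl

variable (a b : ℝ)

lemma contDiff_Fnl (n : WithTop ℕ∞) : ContDiff ℝ n (Fnl a b) := by
  unfold Fnl
  fun_prop

lemma periodic_Fnl : Function.Periodic (Fnl a b) π := fun x => by
  simp only [Fnl, mul_add, sin_add_two_pi, sin_add_pi, neg_sq]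

lemma Fnl_zero : Fnl a b 0 = 0 := by
  simp only [Fnl, mul_zero, sin_zero, zero_mul]

variable {a} in
lemma deriv_Fnl_zero (ha : a ≠ 0) : deriv (Fnl a b) 0 = -b := by
  have hsin : HasDerivAt (fun x => a / 2 * sin (2 * x)) (a / 2 * 2) 0 := by
    simpa using (((hasDerivAt_id (0 : ℝ)).const_mul 2).sin.const_mul (a / 2))
  have hsq : HasDerivAt (fun x => sin x ^ 2 - b / a) 0 0 := by
    simpa using ((hasDerivAt_sin 0).fun_pow 2).sub_const (b / a)
  refine ((hsin.mul hsq).congr_deriv ?_).deriv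
  simp only [mul_zero, sin_zero, zero_pow two_ne_zero]
  field_simp
  ring

lemma exists_lipschitzWith_Fnl : ∃ L : ℝ≥0, LipschitzWith L (Fnl a b) :=
  exists_lipschitzWith_of_periodic (contDiff_Fnl a b 1) (periodic_Fnl a b) pi_ne_zero

lemma exists_lipschitzWith_deriv_Fnl : ∃ M : ℝ≥0, LipschitzWith M (deriv (Fnl a b)) := by
  refine exists_lipschitzWith_of_periodic ?_ (fun x => ?_) pi_ne_zero
  · exact ((contDiff_succ_iff_deriv (n := 1)).1 (contDiff_Fnl a b _)).2.2
  · rw [← deriv_comp_add_const, funext (periodic_Fnl a b)]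

end Fnl

theorem Szero_transition_general (d : ℕ) (hd : 1 ≤ d) (a b : ℝ) (ha : a ≠ 0) (hb : 0 < b)
    (u : ℝ → ℝ → ℝ) (hfam : IsShootingFamily d a b u) (y : ℝ) (hy : y ∈ Szero u)
    (v : ℝ → ℝ) (hv : IsLinearizedSol d a b (u y) v)
    (hneg : ∃ᶠ r in atTop, v r < 0 ∧ deriv v r < 0) :
    ∃ ε > (0 : ℝ), Set.Ioo (y - ε) y ⊆ Splus u ∧ Set.Ioo y (y + ε) ⊆ Sminus u := by
  obtain ⟨hyI, hpos, hlim⟩ := hy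
  obtain ⟨hvC, hv0, hv0', hvode⟩ := hv
  obtain ⟨L, hL⟩ := exists_lipschitzWith_Fnl a b
  obtain ⟨M, hM⟩ := exists_lipschitzWith_deriv_Fnl a b
  have hk : (0 : ℝ) ≤ d - 1 := sub_nonneg.2 (by exact_mod_cast hd)
  have hI : ∀ᶠ x in 𝓝 y, x ∈ Ioo 0 (π / 2) := isOpen_Ioo.mem_nhds hyI
  have hu : ∀ᶠ x in 𝓝 y, IsForcedRadialSol (d - 1) (Fnl a b ∘ u x) (u x) ∧ u x 0 = x :=
    hI.mono fun x hx => have ⟨⟨hC, h0, hode⟩, hx0⟩ := hfam x hx; ⟨⟨hC, h0, hode⟩, hx0⟩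
  obtain ⟨hleft, hright⟩ := shooting_transition hk (contDiff_Fnl a b 1) hL hM (Fnl_zero a b)
    (by rwa [deriv_Fnl_zero b ha, neg_lt_zero]) hu hpos hlim ⟨hvC, hv0', hvode⟩ hv0 hneg
  exact exists_pos_Ioo_subset ((hI.filter_mono nhdsWithin_le_nhds).and hleft)
    ((hI.filter_mono nhdsWithin_le_nhds).and hright)

theorem Szero_transition (d : ℕ) (hd : 2 ≤ d) (a b : ℝ)
    (hb : 0 < b) (hab : 2 * b < a)
    (u : ℝ → ℝ → ℝ) (hfam : IsShootingFamily d a b u)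
    (y : ℝ) (hy : y ∈ Szero u)
    (v : ℝ → ℝ) (hv : IsLinearizedSol d a b (u y) v)
    (hvlim : Tendsto v atTop atBot)
    (hvlim' : Tendsto (deriv v) atTop atBot) :
    ∃ ε > (0 : ℝ), Set.Ioo (y - ε) y ⊆ Splus u ∧ Set.Ioo y (y + ε) ⊆ Sminus u :=
  Szero_transition_general d (by lia) a b (by linarith) hb u hfam y hy v hv
    ((hvlim.eventually_lt_atBot 0).and (hvlim'.eventually_lt_atBot 0)).frequently
end
end
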